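/- arXiv:2404.16694 — 2 statements merged into one kernel-verified Lean document; each statement's English description precedes it below -/
import Mathlib

section
/- Fix an integer r ≥ 2, a real t > 0, reals a < b, a function f that is 2r times continuously differentiable on [a,b], and a constant A > 0. Then there exist B > 0 and h₀ > 0 with the following property. Let a ≤ x_0 < x_1 < … < x_N ≤ b be any grid with mesh size h := max_{1≤k≤N}(x_k − x_{k-1}) ≤ h₀, let i be an index with r ≤ i ≤ N − r + 1, let x* ∈ (x_{i-1}, x_i), and let I^r_0, …, I^r_{r-1} be nonnegative reals satisfying I^r_k ≤ A·h² for all k and |I^r_k − I^r_{k'}| ≤ A·h^{r+1} for all k, k'. Define: p^r_j = Lagrange interpolant of f on {x_{i-r+j}, …, x_{i+j}} for j = 0,…,r−1; for r ≤ l ≤ 2r−2 and 0 ≤ j ≤ 2r−2−l set C^l_{j,j}(x*) = (x* − x_{i-r+j+l+1})/(x_{i-r+j} − x_{i-r+j+l+1}), C^l_{j,j+1}(x*) = 1 − C^l_{j,j}(x*), level-l indicators I^l_{j,j} = I^r_j and I^l_{j,j+1} = I^r_{l-(r-1)+j}, α̃^l_{j,j₁} = C^l_{j,j₁}(x*)/(h²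 + I^l_{j,j₁})^t for j₁ ∈ {j, j+1}, and ω̃^l_{j,j₁} = α̃^l_{j,j₁}/(α̃^l_{j,j} + α̃^l_{j,j+1}); then recursively q^r_j = p^r_j(x*) and q^{l+1}_j = ω̃^l_{j,j}·q^l_j + ω̃^l_{j,j+1}·q^l_{j+1}. Then the progressive WENO value satisfies |q^{2r-1}_0 − f(x*)| ≤ B·h^{2r}. -/
/-- Value at `y` of the Lagrange interpolant of `f` on the nodes `{x k : k ∈ s}`. -/
noncomputable def lagEval (s : Finset ℕ) (x : ℕ → ℝ) (f : ℝ → ℝ) (y : ℝ) : ℝ :=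
  ∑ k ∈ s, f (x k) * ∏ m ∈ s.erase k, (y - x m) / (x k - x m)

/-- Linear Aitken–Neville weight `C^l_{j,j}(x*)` for the stencil starting at `i - r + j`. -/
noncomputable def Cw (x : ℕ → ℝ) (i r : ℕ) (xs : ℝ) (l j : ℕ) : ℝ :=
  (xs - x (i - r + j + l + 1)) / (x (i - r + j) - x (i - r + j + l + 1))

/-- Unnormalized progressive WENO weight `α̃^l_{j,j+v}` (for `v = 0, 1`), with
regularization `ε = h²`, exponent `t`, and level-`l` indicators `I^l_{j,j} = I^r_j`,
`I^l_{j,j+1} = I^r_{l-(r-1)+j}`. -/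
noncomputable def alphaW (x : ℕ → ℝ) (i r : ℕ) (xs h t : ℝ) (I : ℕ → ℝ)
    (l j v : ℕ) : ℝ :=
  (if v = 0 then Cw x i r xs l j else 1 - Cw x i r xs l j) /
    (h ^ 2 + I (if v = 0 then j else l + 1 - r + j)) ^ t

open Polynomial in
theorem iteratedDerivWithin_polynomial_eval {s : Set ℝ} (hs : UniqueDiffOn ℝ s) (n : ℕ)
    (p : ℝ[X]) {y : ℝ} (hy : y ∈ s) :
    iteratedDerivWithin n (fun z => p.eval z) s y = (derivative^[n] p).eval y := by
  induction n generalizing p with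
  | zero => simp
  | succ n ih =>
    rw [iteratedDerivWithin_succ', Function.iterate_succ_apply, ← ih]
    refine iteratedDerivWithin_congr (fun z hz => ?_) hy
    exact p.derivWithin (hs z hz)

/-- Generalized Rolle theorem on a closed interval. -/
theorem exists_iteratedDerivWithin_eq_zero {a b : ℝ} (hab : a < b) (n : ℕ) (g : ℝ → ℝ)
    (hg : ContDiffOn ℝ n g (Set.Icc a b)) (z : Fin (n + 1) → ℝ) (hz : StrictMono z)
    (hmem : ∀ k, z k ∈ Set.Icc a b) (h0 : ∀ k, g (z k) = 0) :
    ∃ ξ ∈ Set.Icc a b, iteratedDerivWithin n g (Set.Icc a b) ξ = 0 := by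
  induction n generalizing g with
  | zero => exact ⟨z 0, hmem 0, by simpa using h0 0⟩
  | succ n ih =>
    have hstep : ∀ k : Fin (n + 1), ∃ c ∈ Set.Ioo (z k.castSucc) (z k.succ), deriv g c = 0 :=
      fun k => exists_deriv_eq_zero (hz k.castSucc_lt_succ)
        (hg.continuousOn.mono (Set.Icc_subset_Icc (hmem _).1 (hmem _).2)) (by rw [h0, h0])
    choose c hc hc0 using hstep
    have hcI : ∀ k, c k ∈ Set.Ioo a b := fun k =>
      ⟨(hmem _).1.trans_lt (hc k).1, (hc k).2.trans_le (hmem _).2⟩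
    rw [iteratedDerivWithin_succ']
    refine ih _ (hg.derivWithin (uniqueDiffOn_Icc hab) (by norm_cast)) c ?_
      (fun k => Set.Ioo_subset_Icc_self (hcI k)) (fun k => ?_)
    · intro k m hkm
      refine (hc k).2.trans_le ((hz.monotone ?_).trans (hc m).1.le)
      rw [Fin.le_def]
      simpa using hkm
    · rw [derivWithin_of_mem_nhds (Icc_mem_nhds (hcI k).1 (hcI k).2), hc0]

theorem lagEval_eq_eval_interpolate (s : Finset ℕ) (x : ℕ → ℝ) (f : ℝ → ℝ) (y : ℝ) :
    lagEval s x f y = (Lagrange.interpolate s x fun k => f (x k)).eval y := by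
  simp only [lagEval, Lagrange.interpolate_apply, Polynomial.eval_finsetSum,
    Polynomial.eval_mul, Polynomial.eval_C, Lagrange.basis, Polynomial.eval_prod]
  refine Finset.sum_congr rfl fun k _ => congrArg _ (Finset.prod_congr rfl fun m _ => ?_)
  simp [Lagrange.basisDivisor, div_eq_inv_mul]

open Polynomial in
/-- Remainder formula for Lagrange interpolation away from the nodes. -/
theorem exists_sub_lagEval_eq {a b : ℝ} (hab : a < b) (s : Finset ℕ) (x : ℕ → ℝ) (f : ℝ → ℝ)
    (hf : ContDiffOn ℝ s.card f (Set.Icc a b)) (hx : Set.InjOn x s)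
    (hmem : ∀ k ∈ s, x k ∈ Set.Icc a b) {y : ℝ} (hy : y ∈ Set.Icc a b)
    (hne : ∀ k ∈ s, y ≠ x k) :
    ∃ ξ ∈ Set.Icc a b, f y - lagEval s x f y =
      iteratedDerivWithin s.card f (Set.Icc a b) ξ / (s.card).factorial * ∏ k ∈ s, (y - x k) := by
  set P := Lagrange.interpolate s x fun k => f (x k) with hP
  have hny : (Lagrange.nodal s x).eval y ≠ 0 := Lagrange.eval_nodal_not_at_node hne
  set c := (f y - P.eval y) / (Lagrange.nodal s x).eval y with hc
  set Q := P + C c * Lagrange.nodal s x with hQ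
  have hQx : ∀ k ∈ s, Q.eval (x k) = f (x k) := fun k hk => by
    rw [hQ, eval_add, eval_mul, Lagrange.eval_nodal_at_node hk, mul_zero, add_zero, hP,
      Lagrange.eval_interpolate_at_node _ hx hk]
  have hQy : Q.eval y = f y := by
    simp only [hQ, eval_add, eval_mul, eval_C, hc]
    field_simp
    ring
  have hPdeg : P.degree < s.card := Lagrange.degree_interpolate_lt _ hx
  have hdQ : derivative^[s.card] Q = C ((s.card).factorial * c) := by
    have hnod : derivative^[s.card] (Lagrange.nodal s x) = C ((s.card).factorial : ℝ) := by
      have := natDegree_iterate_derivative (Lagrange.nodal s x) s.card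
      rw [Lagrange.natDegree_nodal, Nat.sub_self] at this
      rw [eq_C_of_natDegree_le_zero this, coeff_iterate_derivative]
      have h1 := (Lagrange.nodal_monic (s := s) (v := x)).coeff_natDegree
      rw [Lagrange.natDegree_nodal] at h1
      simp [h1, Nat.descFactorial_self]
    rw [hQ, iterate_map_add, iterate_derivative_eq_zero_of_degree_lt hPdeg,
      iterate_derivative_C_mul, hnod, zero_add, ← C_mul, mul_comm]
  have hyx : y ∉ s.image x := by
    simp only [Finset.mem_image, not_exists, not_and]
    exact fun k hk h => hne k hk h.symm
  have hcard : (insert y (s.image x)).card = s.card + 1 := by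
    rw [Finset.card_insert_of_notMem hyx, Finset.card_image_of_injOn hx]
  set Z := insert y (s.image x) with hZ
  have hZmem : ∀ z ∈ Z, z ∈ Set.Icc a b ∧ f z - Q.eval z = 0 := by
    intro z hz
    rw [hZ, Finset.mem_insert, Finset.mem_image] at hz
    rcases hz with rfl | ⟨k, hk, rfl⟩
    · exact ⟨hy, by rw [hQy, sub_self]⟩
    · exact ⟨hmem k hk, by rw [hQx k hk, sub_self]⟩
  have hQc : ContDiffOn ℝ s.card (fun z => Q.eval z) (Set.Icc a b) := by
    simpa [aeval_def] using (Q.contDiff_aeval (𝕜 := ℝ) (s.card : WithTop ℕ∞)).contDiffOn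
  obtain ⟨ξ, hξ, h0⟩ := exists_iteratedDerivWithin_eq_zero hab s.card
    (f - fun z => Q.eval z) (hf.sub hQc) (Z.orderEmbOfFin hcard)
    (Z.orderEmbOfFin hcard).strictMono
    (fun k => (hZmem _ (Z.orderEmbOfFin_mem hcard k)).1)
    (fun k => (hZmem _ (Z.orderEmbOfFin_mem hcard k)).2)
  refine ⟨ξ, hξ, ?_⟩
  rw [iteratedDerivWithin_sub hξ (uniqueDiffOn_Icc hab) (hf ξ hξ) (hQc ξ hξ),
    iteratedDerivWithin_polynomial_eval (uniqueDiffOn_Icc hab) _ _ hξ, hdQ, eval_C,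
    sub_eq_zero] at h0
  have hfac : ((s.card).factorial : ℝ) ≠ 0 := by positivity
  rw [h0, mul_div_cancel_left₀ _ hfac, lagEval_eq_eval_interpolate, ← hP, ← Lagrange.eval_nodal,
    hc, div_mul_cancel₀ _ hny]

theorem abs_lagEval_sub_le {a b : ℝ} (hab : a < b) (s : Finset ℕ) (x : ℕ → ℝ) (f : ℝ → ℝ)
    (hf : ContDiffOn ℝ s.card f (Set.Icc a b)) (hx : Set.InjOn x s)
    (hmem : ∀ k ∈ s, x k ∈ Set.Icc a b) {y : ℝ} (hy : y ∈ Set.Icc a b)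
    (hne : ∀ k ∈ s, y ≠ x k) {M d : ℝ}
    (hM : ∀ ξ ∈ Set.Icc a b, |iteratedDerivWithin s.card f (Set.Icc a b) ξ| ≤ M)
    (hd : ∀ k ∈ s, |y - x k| ≤ d) :
    |lagEval s x f y - f y| ≤ M * d ^ s.card := by
  obtain ⟨ξ, hξ, h⟩ := exists_sub_lagEval_eq hab s x f hf hx hmem hy hne
  have hM0 : 0 ≤ M := (abs_nonneg _).trans (hM ξ hξ)
  have hfac : (1 : ℝ) ≤ (s.card).factorial := by
    exact_mod_cast Nat.succ_le_of_lt (Nat.factorial_pos _)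
  rw [abs_sub_comm, h, abs_mul, abs_div, Nat.abs_cast, Finset.abs_prod]
  refine mul_le_mul ?_ ?_ (Finset.prod_nonneg fun _ _ => abs_nonneg _) hM0
  · exact (div_le_self (abs_nonneg _) hfac).trans (hM ξ hξ)
  · exact (Finset.prod_le_prod (fun _ _ => abs_nonneg _) hd).trans_eq (by simp)

/-- The Aitken–Neville recursion. -/
theorem lagEval_Icc_succ (x : ℕ → ℝ) (f : ℝ → ℝ) (y : ℝ) (p l : ℕ)
    (hx : Set.InjOn x (Finset.Icc p (p + l + 1))) :
    lagEval (Finset.Icc p (p + l + 1)) x f y =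
      (y - x (p + l + 1)) / (x p - x (p + l + 1)) * lagEval (Finset.Icc p (p + l)) x f y +
      (1 - (y - x (p + l + 1)) / (x p - x (p + l + 1))) *
        lagEval (Finset.Icc (p + 1) (p + l + 1)) x f y := by
  have hp : p ∈ Finset.Icc p (p + l + 1) := by simp [add_assoc]
  have hq : p + l + 1 ∈ Finset.Icc p (p + l + 1) := by simp [add_assoc]
  have hne : x p - x (p + l + 1) ≠ 0 := fun h => by
    have := hx hp hq (sub_eq_zero.mp h)
    omega
  have e1 : (Finset.Icc p (p + l + 1)).erase (p + l + 1) = Finset.Icc p (p + l) := by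
    grind
  have e2 : (Finset.Icc p (p + l + 1)).erase p = Finset.Icc (p + 1) (p + l + 1) := by
    grind
  have hw : 1 - (y - x (p + l + 1)) / (x p - x (p + l + 1)) =
      (x (p + l + 1) - x p)⁻¹ * (y - x p) := by
    have hne' : x (p + l + 1) - x p ≠ 0 := fun h => hne (by linarith)
    field_simp
    ring
  simp only [lagEval_eq_eval_interpolate]
  rw [Lagrange.interpolate_eq_add_interpolate_erase _ hx hp hq (by omega), e1, e2, hw]
  simp [Lagrange.basisDivisor]
  ring

theorem rpow_le_of_sub_le {t A u c d ρ : ℝ} (ht : 0 < t) (hρ : 0 ≤ ρ) (hρA : ρ ≤ A)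
    (hu : 0 < u) (hc : u ≤ c) (hd : u ≤ d) (h : c - d ≤ ρ * u) :
    c ^ t ≤ (1 + t * Real.exp (t * A) * ρ) * d ^ t := by
  have hd0 : 0 ≤ d := hu.le.trans hd
  have h1 : c ≤ Real.exp ρ * d := by
    nlinarith [Real.add_one_le_exp ρ, mul_le_mul_of_nonneg_left hd hρ]
  have h2 : Real.exp (t * ρ) ≤ 1 + t * Real.exp (t * A) * ρ := by
    have h3 := Real.add_one_le_exp (-(t * ρ))
    have h4 : Real.exp (-(t * ρ)) * Real.exp (t * ρ) = 1 := by
      rw [← Real.exp_add]; simp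
    have h5 : Real.exp (t * ρ) ≤ Real.exp (t * A) := by gcongr
    have h6 : 0 ≤ t * ρ := by positivity
    nlinarith [mul_le_mul_of_nonneg_right h3 (Real.exp_pos (t * ρ)).le,
      mul_le_mul_of_nonneg_left h5 h6]
  calc c ^ t ≤ (Real.exp ρ * d) ^ t := Real.rpow_le_rpow (hu.le.trans hc) h1 ht.le
    _ = Real.exp (t * ρ) * d ^ t := by
      rw [Real.mul_rpow (Real.exp_pos _).le hd0, ← Real.exp_mul, mul_comm ρ t]
    _ ≤ _ := by gcongr

/-- Convex weights perturbed by comparable denominators. -/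
theorem abs_normalized_weight_sub_le {C d e δ : ℝ} (hC0 : 0 ≤ C) (hC1 : C ≤ 1) (hd : 0 < d)
    (he : 0 < e) (hδ : 0 ≤ δ) (hde : d ≤ (1 + δ) * e) (hed : e ≤ (1 + δ) * d) :
    0 ≤ C / d / (C / d + (1 - C) / e) ∧ C / d / (C / d + (1 - C) / e) ≤ 1 ∧
      (1 - C) / e / (C / d + (1 - C) / e) = 1 - C / d / (C / d + (1 - C) / e) ∧
      |C / d / (C / d + (1 - C) / e) - C| ≤ δ := by
  have hC : 0 ≤ 1 - C := by linarith
  have hS : 0 < C * e + (1 - C) * d := by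
    rcases hC0.eq_or_lt with rfl | h
    · simpa using hd
    · have := mul_pos h he
      have := mul_nonneg hC hd.le
      linarith
  have hW : C / d + (1 - C) / e = (C * e + (1 - C) * d) / (d * e) := by
    field_simp
  have hWpos : 0 < C / d + (1 - C) / e := by rw [hW]; positivity
  refine ⟨by positivity, ?_, ?_, ?_⟩
  · rw [div_le_one hWpos]
    have : 0 ≤ (1 - C) / e := by positivity
    linarith
  · field_simp
    ring
  · have hdiff : C / d / (C / d + (1 - C) / e) - C =
        C * (1 - C) * (e - d) / (C * e + (1 - C) * d) := by
      rw [hW, sub_eq_iff_eq_add, div_add' _ _ _ hS.ne']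
      field_simp
      ring
    have hCC : C * (1 - C) ≤ 1 := by nlinarith
    have hCC0 : 0 ≤ C * (1 - C) := by positivity
    have hed' : |e - d| ≤ δ * (C * e + (1 - C) * d) := by
      rw [abs_le]
      rcases le_total d e with h | h
      · have : 0 ≤ δ * (C * (e - d)) := by have := sub_nonneg.mpr h; positivity
        constructor <;> nlinarith
      · have : 0 ≤ δ * ((1 - C) * (d - e)) := by have := sub_nonneg.mpr h; positivity
        constructor <;> nlinarith
    rw [hdiff, abs_div, abs_of_pos hS, div_le_iff₀ hS, abs_mul, abs_of_nonneg hCC0]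
    calc C * (1 - C) * |e - d| ≤ 1 * |e - d| := by gcongr
      _ ≤ _ := by rwa [one_mul]

theorem exists_bound_iteratedDerivWithin {a b : ℝ} (hab : a < b) {f : ℝ → ℝ} {m : ℕ}
    (hf : ContDiffOn ℝ m f (Set.Icc a b)) :
    ∃ M > 0, ∀ n ≤ m, ∀ ξ ∈ Set.Icc a b, |iteratedDerivWithin n f (Set.Icc a b) ξ| ≤ M := by
  have h : ∀ n, ∃ c, n ≤ m → ∀ ξ ∈ Set.Icc a b, |iteratedDerivWithin n f (Set.Icc a b) ξ| ≤ c := by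
    intro n
    by_cases hn : n ≤ m
    · obtain ⟨c, hc⟩ := isCompact_Icc.exists_bound_of_continuousOn
        (hf.continuousOn_iteratedDerivWithin (by exact_mod_cast hn) (uniqueDiffOn_Icc hab))
      exact ⟨c, fun _ => hc⟩
    · exact ⟨0, fun h => absurd h hn⟩
  choose c hc using h
  refine ⟨1 + ∑ n ∈ Finset.range (m + 1), |c n|, by positivity, fun n hn ξ hξ => ?_⟩
  have h1 : |c n| ≤ ∑ n ∈ Finset.range (m + 1), |c n| :=
    Finset.single_le_sum (f := fun n => |c n|) (fun _ _ => abs_nonneg _)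
      (Finset.mem_range.mpr (by omega))
  linarith [hc n hn ξ hξ, le_abs_self (c n)]

theorem sub_le_mul_of_step_le {N : ℕ} {x : ℕ → ℝ} {h : ℝ}
    (hstep : ∀ k : ℕ, 1 ≤ k → k ≤ N → x k - x (k - 1) ≤ h) (k n : ℕ) (hn : k + n ≤ N) :
    x (k + n) - x k ≤ n * h := by
  induction n with
  | zero => simp
  | succ n ih =>
    have h1 := ih (by omega)
    have h2 := hstep (k + (n + 1)) (by omega) hn
    rw [show k + (n + 1) - 1 = k + n by omega] at h2
    push_cast
    linarith

theorem stmt7 (r : ℕ) (hr : 2 ≤ r) (t : ℝ) (ht : 0 < t) (a b : ℝ) (hab : a < b)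
    (f : ℝ → ℝ) (hf : ContDiffOn ℝ (2 * r) f (Set.Icc a b)) (A : ℝ) (hA : 0 < A) :
    ∃ B > 0, ∃ h₀ > 0,
      ∀ (N : ℕ) (x : ℕ → ℝ) (h : ℝ) (i : ℕ) (xs : ℝ) (I : ℕ → ℝ) (q : ℕ → ℕ → ℝ),
        a ≤ x 0 → x N ≤ b →
        (∀ k k' : ℕ, k < k' → k' ≤ N → x k < x k') →
        (∀ k : ℕ, 1 ≤ k → k ≤ N → x k - x (k - 1) ≤ h) →
        (∃ k : ℕ, 1 ≤ k ∧ k ≤ N ∧ x k - x (k - 1) = h) →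
        h ≤ h₀ →
        r ≤ i → i + r ≤ N + 1 →
        x (i - 1) < xs → xs < x i →
        (∀ k : ℕ, k < r → 0 ≤ I k) →
        (∀ k : ℕ, k < r → I k ≤ A * h ^ 2) →
        (∀ k k' : ℕ, k < r → k' < r → |I k - I k'| ≤ A * h ^ (r + 1)) →
        (∀ j : ℕ, j < r → q r j = lagEval (Finset.Icc (i - r + j) (i + j)) x f xs) →
        (∀ l j : ℕ, r ≤ l → l + 2 ≤ 2 * r → j + l + 2 ≤ 2 * r →
          q (l + 1) j =
            alphaW x i r xs h t I l j 0 /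
                (alphaW x i r xs h t I l j 0 + alphaW x i r xs h t I l j 1) * q l j +
              alphaW x i r xs h t I l j 1 /
                (alphaW x i r xs h t I l j 0 + alphaW x i r xs h t I l j 1) * q l (j + 1)) →
        |q (2 * r - 1) 0 - f xs| ≤ B * h ^ (2 * r) := by
  obtain ⟨M, hM0, hM⟩ := exists_bound_iteratedDerivWithin (m := 2 * r) hab (by exact_mod_cast hf)
  set D : ℝ := M * (2 * r) ^ (2 * r) with hD
  have hr1 : (1 : ℝ) ≤ 2 * r := by
    have : (2 : ℝ) ≤ r := by exact_mod_cast hr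
    linarith
  have hD0 : 0 < D := by positivity
  set K : ℝ := t * Real.exp (t * A) * A with hK
  have hK0 : 0 < K := by positivity
  refine ⟨r * (K * (2 * D)) + D, by positivity, 1, one_pos, ?_⟩
  intro N x h i xs I q hax hxb hmono hstep hmax hh hri hiN hxs1 hxs2 hI0 _ hIdiff hqr hqs
  have hpos : 0 < h := by
    obtain ⟨k, hk1, hkN, hk⟩ := hmax
    have := hmono (k - 1) k (by omega) hkN
    linarith
  have hmonole : ∀ k k' : ℕ, k ≤ k' → k' ≤ N → x k ≤ x k' := fun k k' hk hk' => by
    rcases hk.eq_or_lt with rfl | hlt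
    · exact le_rfl
    · exact (hmono k k' hlt hk').le
  have hinj : ∀ p m : ℕ, m ≤ N → Set.InjOn x (Finset.Icc p m) := by
    intro p m hm k hk k' hk' hkk
    simp only [Finset.coe_Icc, Set.mem_Icc] at hk hk'
    rcases lt_trichotomy k k' with hlt | rfl | hlt
    · exact absurd hkk (hmono k k' hlt (by omega)).ne
    · rfl
    · exact absurd hkk (hmono k' k hlt (by omega)).ne'
  have hxI : ∀ k ≤ N, x k ∈ Set.Icc a b := fun k hk =>
    ⟨hax.trans (hmonole 0 k (by omega) hk), (hmonole k N hk le_rfl).trans hxb⟩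
  have hxsI : xs ∈ Set.Icc a b :=
    ⟨(hxI (i - 1) (by omega)).1.trans hxs1.le, hxs2.le.trans (hxI i (by omega)).2⟩
  have hnear : ∀ k, i - r ≤ k → k + 1 ≤ i + r → |xs - x k| ≤ 2 * r * h := by
    intro k hk1 hk2
    have hw := sub_le_mul_of_step_le hstep (i - r) (2 * r - 1) (by omega)
    have h1 := hmonole (i - r) (i - 1) (by omega) (by omega)
    have h2 := hmonole i (i - r + (2 * r - 1)) (by omega) (by omega)
    have h3 := hmonole (i - r) k hk1 (by omega)
    have h4 := hmonole k (i - r + (2 * r - 1)) (by omega) (by omega)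
    have h5 : ((2 * r - 1 : ℕ) : ℝ) * h ≤ 2 * r * h := by
      gcongr
      exact_mod_cast Nat.sub_le _ _
    rw [abs_le]
    constructor <;> linarith
  have herr : ∀ l j : ℕ, r ≤ l → j + l + 1 ≤ 2 * r →
      |lagEval (Finset.Icc (i - r + j) (i - r + j + l)) x f xs - f xs| ≤ D * h ^ (l + 1) := by
    intro l j hl hj
    have hcard : (Finset.Icc (i - r + j) (i - r + j + l)).card = l + 1 := by
      rw [Nat.card_Icc]; omega
    have hne : ∀ k ∈ Finset.Icc (i - r + j) (i - r + j + l), xs ≠ x k := by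
      intro k hk
      rw [Finset.mem_Icc] at hk
      rcases lt_or_ge k i with hlt | hge
      · exact ((hmonole k (i - 1) (by omega) (by omega)).trans_lt hxs1).ne'
      · exact (hxs2.trans_le (hmonole i k hge (by omega))).ne
    have hb := abs_lagEval_sub_le hab (Finset.Icc (i - r + j) (i - r + j + l)) x f
      (hf.of_le (by rw [hcard]; exact_mod_cast (by omega : l + 1 ≤ 2 * r)))
      (hinj _ _ (by omega))
      (fun k hk => hxI k (by rw [Finset.mem_Icc] at hk; omega)) hxsI hne
      (hM _ (by rw [hcard]; omega))
      (fun k hk => hnear k (by rw [Finset.mem_Icc] at hk; omega)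
        (by rw [Finset.mem_Icc] at hk; omega))
    rw [hcard, mul_pow, ← mul_assoc] at hb
    refine hb.trans ?_
    rw [hD]
    gcongr
    omega
  have hCw : ∀ l j : ℕ, r ≤ l → j + l + 2 ≤ 2 * r →
      0 ≤ Cw x i r xs l j ∧ Cw x i r xs l j ≤ 1 := by
    intro l j hl hj
    have h1 := hmonole (i - r + j) (i - 1) (by omega) (by omega)
    have h2 := hmonole i (i - r + j + l + 1) (by omega) (by omega)
    unfold Cw
    refine ⟨div_nonneg_of_nonpos (by linarith) (by linarith), ?_⟩
    rw [div_le_one_of_neg (by linarith)]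
    linarith
  have hρ0 : 0 ≤ A * h ^ (r - 1) := by positivity
  have hρA : A * h ^ (r - 1) ≤ A :=
    mul_le_of_le_one_right hA.le (pow_le_one₀ hpos.le hh)
  have hcomp : ∀ k k' : ℕ, k < r → k' < r →
      (h ^ 2 + I k) ^ t ≤ (1 + K * h ^ (r - 1)) * (h ^ 2 + I k') ^ t := by
    intro k k' hk hk'
    have hpw : A * h ^ (r - 1) * h ^ 2 = A * h ^ (r + 1) := by
      rw [mul_assoc, ← pow_add, show r - 1 + 2 = r + 1 by omega]
    have := rpow_le_of_sub_le (c := h ^ 2 + I k) (d := h ^ 2 + I k') ht hρ0 hρA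
      (pow_pos hpos 2) (by linarith [hI0 k hk]) (by linarith [hI0 k' hk'])
      (by rw [hpw]; linarith [(abs_le.mp (hIdiff k k' hk hk')).2])
    rwa [← mul_assoc] at this
  have hden : ∀ k < r, 0 < (h ^ 2 + I k) ^ t := fun k hk =>
    Real.rpow_pos_of_pos (by have := hI0 k hk; positivity) _
  have hq : ∀ n j : ℕ, j + n + 1 ≤ r →
      |q (r + n) j - lagEval (Finset.Icc (i - r + j) (i - r + j + (r + n))) x f xs| ≤
        n * (K * (2 * D)) * h ^ (2 * r) := by
    intro n
    induction n with
    | zero =>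
      intro j hj
      rw [add_zero, hqr j (by omega), show i - r + j + r = i + j by omega]
      simp
    | succ n ih =>
      intro j hj
      obtain ⟨hC0, hC1⟩ := hCw (r + n) j (by omega) (by omega)
      have hk' : r + n + 1 - r + j < r := by omega
      obtain ⟨hw0, hw1, hw, hwC⟩ := abs_normalized_weight_sub_le hC0 hC1 (hden j (by omega))
        (hden _ hk') (by positivity : 0 ≤ K * h ^ (r - 1)) (hcomp _ _ (by omega) hk')
        (hcomp _ _ hk' (by omega))
      have hrec := hqs (r + n) j (by omega) (by omega) (by omega)
      simp only [alphaW, if_true, one_ne_zero, if_false] at hrec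
      rw [hw] at hrec
      have hN := lagEval_Icc_succ x f xs (i - r + j) (r + n) (hinj _ _ (by omega))
      have e0 := ih j (by omega)
      have e1 := ih (j + 1) (by omega)
      have p0 := herr (r + n) j (by omega) (by omega)
      have p1 := herr (r + n) (j + 1) (by omega) (by omega)
      rw [show i - r + (j + 1) + (r + n) = i - r + j + (r + n) + 1 by omega,
        show i - r + (j + 1) = i - r + j + 1 by omega] at e1 p1
      rw [show r + (n + 1) = r + n + 1 by omega, hrec,
        show i - r + j + (r + n + 1) = i - r + j + (r + n) + 1 by omega, hN]
      change 0 ≤ Cw x i r xs (r + n) j at hC0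
      change |_ + _ - (Cw x i r xs (r + n) j * _ + (1 - Cw x i r xs (r + n) j) * _)| ≤ _
      set C := Cw x i r xs (r + n) j
      set ω := C / (h ^ 2 + I j) ^ t /
        (C / (h ^ 2 + I j) ^ t + (1 - C) / (h ^ 2 + I (r + n + 1 - r + j)) ^ t)
      set P0 := lagEval (Finset.Icc (i - r + j) (i - r + j + (r + n))) x f xs
      set P1 := lagEval (Finset.Icc (i - r + j + 1) (i - r + j + (r + n) + 1)) x f xs
      set E := n * (K * (2 * D)) * h ^ (2 * r)
      have hPP : |P0 - P1| ≤ 2 * D * h ^ (r + n + 1) := by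
        rw [abs_le] at p0 p1 ⊢
        constructor <;> linarith
      have hprod : |ω - C| * |P0 - P1| ≤ K * (2 * D) * h ^ (2 * r) := by
        calc |ω - C| * |P0 - P1| ≤ (K * h ^ (r - 1)) * (2 * D * h ^ (r + n + 1)) := by gcongr
          _ = K * (2 * D) * h ^ (2 * r + n) := by
            rw [show 2 * r + n = (r - 1) + (r + n + 1) by omega, pow_add]
            ring
          _ ≤ K * (2 * D) * h ^ (2 * r) := by
            gcongr ?_ * ?_
            exact pow_le_pow_of_le_one hpos.le hh (by omega)
      have hsplit : ω * q (r + n) j + (1 - ω) * q (r + n) (j + 1) - (C * P0 + (1 - C) * P1) =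
          ω * (q (r + n) j - P0) + (1 - ω) * (q (r + n) (j + 1) - P1) + (ω - C) * (P0 - P1) := by
        ring
      rw [hsplit]
      refine (abs_add_three _ _ _).trans ?_
      rw [abs_mul, abs_mul, abs_mul, abs_of_nonneg hw0, abs_of_nonneg (sub_nonneg.mpr hw1)]
      have g0 := mul_le_mul_of_nonneg_left e0 hw0
      have g1 := mul_le_mul_of_nonneg_left e1 (sub_nonneg.mpr hw1)
      have : ((n + 1 : ℕ) : ℝ) * (K * (2 * D)) * h ^ (2 * r) =
          E + K * (2 * D) * h ^ (2 * r) := by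
        push_cast
        ring
      rw [this]
      linarith
  have hfin := hq (r - 1) 0 (by omega)
  have hlast := herr (r + (r - 1)) 0 (by omega) (by omega)
  rw [show r + (r - 1) = 2 * r - 1 by omega] at hfin hlast
  rw [show 2 * r - 1 + 1 = 2 * r by omega] at hlast
  have hcoef : ((r - 1 : ℕ) : ℝ) * (K * (2 * D)) * h ^ (2 * r) ≤
      r * (K * (2 * D)) * h ^ (2 * r) := by
    gcongr
    exact Nat.sub_le _ _
  refine (abs_sub_le _ _ _).trans ((add_le_add (hfin.trans hcoef) hlast).trans_eq ?_)
  ring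
end

section
/- Let n ≥ 1 and r ≥ 2 be integers, t > 0 a real, B = Π_{q=1}^n [a_q, b_q] a box, f : ℝⁿ → ℝ a function that is 2nr times continuously differentiable on B, and A > 0 a constant. Then there exist B' > 0 and h₀ > 0 with the following property. For each q = 1, …, n let a_q ≤ x^{(q)}_0 < … < x^{(q)}_{N_q} ≤ b_q be a grid, with global mesh size h := max over all q and k of (x^{(q)}_k − x^{(q)}_{k-1}) satisfying h ≤ h₀; let i_q be indices with r ≤ i_q ≤ N_q − r + 1; let x* with x^{(q)}_{i_q-1} < x_q* < x^{(q)}_{i_q} for each q; and let (I^r_k)_{k∈{0,…,r−1}ⁿ} be nonnegative reals with I^r_k ≤ A·h² for all k and |I^r_k − I^r_{k'}| ≤ A·h^{r+1} for all k, k'. Define the progressive multivariate WENO value Q^{2r-1}_0 as follows: for k ∈ {0,…,r−1}ⁿ, Q^r_k = P^r_k(x*), where P^r_k is the tensor-product Lagrange interpolant of f on Π_q {x^{(q)}_{i_q-r+k_q}, …, x^{(q)}_{i_q+k_q}}; for l = r, …, 2r−2 and j ∈ {0,…,2r−2−l}ⁿ, Q^{l+1}_j = Σ_{v∈{0,1}ⁿ}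 ω̃^l_{j,j+v} · Q^l_{j+v}, where ω̃^l_{j,j+v} = α̃^l_{j,j+v}/Σ_{w∈{0,1}ⁿ} α̃^l_{j,j+w}, α̃^l_{j,j+v} = (Π_q C^l_{j_q, j_q+v_q}(x_q*))/(h² + I^r_{j+(l−(r−1))v})^t, and C^l_{j_q, j_q}(x_q*) = (x_q* − x^{(q)}_{i_q-r+j_q+l+1})/(x^{(q)}_{i_q-r+j_q} − x^{(q)}_{i_q-r+j_q+l+1}), C^l_{j_q, j_q+1}(x_q*) = 1 − C^l_{j_q, j_q}(x_q*). Then |Q^{2r-1}_0 − f(x*)| ≤ B'·h^{2r}. -/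
/-- Value at `y` of the tensor-product Lagrange interpolant of `f` on the Cartesian
product of the node sets `{x q k : k ∈ s q}`, `q = 1, …, n`. -/
noncomputable def tensorLagEval (n : ℕ) (s : Fin n → Finset ℕ) (x : Fin n → ℕ → ℝ)
    (f : (Fin n → ℝ) → ℝ) (y : Fin n → ℝ) : ℝ :=
  ∑ l ∈ Fintype.piFinset s, f (fun q => x q (l q)) *
    ∏ q, ∏ k ∈ (s q).erase (l q), (y q - x q k) / (x q (l q) - x q k)

/-- Unnormalized progressive multivariate WENO weight
`α̃^l_{j,j+v} = (Π_q C^l_{j_q, j_q+v_q}(x*_q)) / (h² + I^r_{j+(l-(r-1))·v})^t`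
for `v ∈ {0,1}ⁿ`. -/
noncomputable def wenoAlpha (n r : ℕ) (x : Fin n → ℕ → ℝ) (i : Fin n → ℕ)
    (xs : Fin n → ℝ) (h t : ℝ) (I : (Fin n → ℕ) → ℝ) (l : ℕ) (j v : Fin n → ℕ) : ℝ :=
  (∏ q : Fin n,
    (if v q = 0 then
      (xs q - x q (i q - r + j q + l + 1)) /
        (x q (i q - r + j q) - x q (i q - r + j q + l + 1))
    else
      1 - (xs q - x q (i q - r + j q + l + 1)) /
        (x q (i q - r + j q) - x q (i q - r + j q + l + 1)))) /
    (h ^ 2 + I (fun q => j q + (l + 1 - r) * v q)) ^ t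

/-- The value at `y` of the Lagrange basis polynomial of the nodes `v` on `s` at index `k`. -/
noncomputable def lagrangeWeight (s : Finset ℕ) (v : ℕ → ℝ) (y : ℝ) (k : ℕ) : ℝ :=
  ∏ k' ∈ s.erase k, (y - v k') / (v k - v k')

theorem lagrangeWeight_eq_eval_basis (s : Finset ℕ) (v : ℕ → ℝ) (y : ℝ) (k : ℕ) :
    lagrangeWeight s v y k = (Lagrange.basis s v k).eval y := by
  simp only [lagrangeWeight, Lagrange.basis, Polynomial.eval_prod, Lagrange.basisDivisor,
    Polynomial.eval_mul, Polynomial.eval_C, Polynomial.eval_sub, Polynomial.eval_X]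
  exact Finset.prod_congr rfl fun _ _ => by rw [div_eq_inv_mul]

theorem eval_interpolate_eq_sum_lagrangeWeight (s : Finset ℕ) (v r : ℕ → ℝ) (y : ℝ) :
    (Lagrange.interpolate s v r).eval y = ∑ k ∈ s, r k * lagrangeWeight s v y k := by
  simp [Lagrange.interpolate_apply, Polynomial.eval_finsetSum, lagrangeWeight_eq_eval_basis]

theorem sum_lagrangeWeight {s : Finset ℕ} {v : ℕ → ℝ} (hv : Set.InjOn v s) (hs : s.Nonempty)
    (y : ℝ) : ∑ k ∈ s, lagrangeWeight s v y k = 1 := by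
  simp only [lagrangeWeight_eq_eval_basis, ← Polynomial.eval_finsetSum,
    Lagrange.sum_basis hv hs, Polynomial.eval_one]

/-- Neville's recursion for the Lagrange weights, extended by zero outside their node sets. -/
theorem lagrangeWeight_neville {s : Finset ℕ} {v : ℕ → ℝ} (hv : Set.InjOn v s) {p q : ℕ}
    (hp : p ∈ s) (hq : q ∈ s) (hpq : p ≠ q) (y : ℝ) {k : ℕ} (hk : k ∈ s) :
    lagrangeWeight s v y k =
      (if k ∈ s.erase q then lagrangeWeight (s.erase q) v y k else 0) *
          ((y - v q) / (v p - v q)) +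
        (if k ∈ s.erase p then lagrangeWeight (s.erase p) v y k else 0) *
          (1 - (y - v q) / (v p - v q)) := by
  have hne : v p - v q ≠ 0 := sub_ne_zero.2 fun h => hpq (hv hp hq h)
  have hne' : v q - v p ≠ 0 := sub_ne_zero.2 fun h => hpq (hv hp hq h.symm)
  have h := congrArg (Polynomial.eval y)
    (Lagrange.interpolate_eq_add_interpolate_erase (r := fun j => if k = j then (1 : ℝ) else 0)
      hv hp hq hpq)
  simp only [Polynomial.eval_add, Polynomial.eval_mul, eval_interpolate_eq_sum_lagrangeWeight,
    ite_mul, one_mul, zero_mul, Finset.sum_ite_eq, hk, if_true, Lagrange.basisDivisor,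
    Polynomial.eval_C, Polynomial.eval_sub, Polynomial.eval_X] at h
  have h1 : (v q - v p)⁻¹ * (y - v p) = 1 - (y - v q) / (v p - v q) := by
    field_simp
    ring
  rw [h, ← h1, ite_zero_mul, ite_zero_mul, div_eq_inv_mul]

/-- A version of Rolle's theorem that counts zeros. -/
theorem exists_finset_zeros_of_hasDerivWithinAt {a b : ℝ} {g g' : ℝ → ℝ}
    (hg : ∀ s ∈ Set.Icc a b, HasDerivWithinAt g (g' s) (Set.Icc a b) s) (m : ℕ) {Z : Finset ℝ}
    (hZ : Z.card = m + 1) (hZI : ∀ z ∈ Z, z ∈ Set.Icc a b) (hZ0 : ∀ z ∈ Z, g z = 0) :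
    ∃ Y : Finset ℝ, Y.card = m ∧ (∀ z ∈ Y, z ∈ Set.Icc a b) ∧ ∀ z ∈ Y, g' z = 0 := by
  set e := Z.orderEmbOfFin hZ
  have he : ∀ k, e k ∈ Z := Z.orderEmbOfFin_mem hZ
  have hex : ∀ k : Fin m, ∃ ξ, e k.castSucc < ξ ∧ ξ < e k.succ ∧ g' ξ = 0 := by
    intro k
    have hsub : Set.Icc (e k.castSucc) (e k.succ) ⊆ Set.Icc a b :=
      Set.Icc_subset_Icc (hZI _ (he _)).1 (hZI _ (he _)).2
    obtain ⟨ξ, hξ, h0⟩ := exists_hasDerivAt_eq_zero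
      (e.strictMono (Fin.castSucc_lt_succ (i := k)))
      (fun s hs => ((hg s (hsub hs)).mono hsub).continuousWithinAt)
      (by rw [hZ0 _ (he _), hZ0 _ (he _)])
      (fun s hs => (hg s (hsub (Set.Ioo_subset_Icc_self hs))).hasDerivAt
        (Filter.mem_of_superset (Icc_mem_nhds hs.1 hs.2) hsub))
    exact ⟨ξ, hξ.1, hξ.2, h0⟩
  choose ξ h1 h2 h3 using hex
  have hmono : StrictMono ξ := fun k k' hk =>
    (h2 k).trans_le ((e.monotone (Fin.succ_le_castSucc_iff.2 hk)).trans (h1 k').le)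
  refine ⟨Finset.univ.image ξ, ?_, ?_, ?_⟩
  · rw [Finset.card_image_of_injective _ hmono.injective, Finset.card_univ, Fintype.card_fin]
  · simp only [Finset.mem_image, Finset.mem_univ, true_and]
    rintro _ ⟨k, rfl⟩
    exact ⟨(hZI _ (he _)).1.trans (h1 k).le, (h2 k).le.trans (hZI _ (he _)).2⟩
  · simp only [Finset.mem_image, Finset.mem_univ, true_and]
    rintro _ ⟨k, rfl⟩
    exact h3 k

theorem exists_zero_of_hasDerivWithinAt_chain {a b : ℝ} (M : ℕ) {g : ℕ → ℝ → ℝ}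
    (hg : ∀ k < M, ∀ s ∈ Set.Icc a b, HasDerivWithinAt (g k) (g (k + 1) s) (Set.Icc a b) s)
    {Z : Finset ℝ} (hZ : Z.card = M + 1) (hZI : ∀ z ∈ Z, z ∈ Set.Icc a b)
    (hZ0 : ∀ z ∈ Z, g 0 z = 0) : ∃ ξ ∈ Set.Icc a b, g M ξ = 0 := by
  induction M generalizing g Z with
  | zero =>
    obtain ⟨z, hz⟩ := Finset.card_pos.1 (by omega : 0 < Z.card)
    exact ⟨z, hZI z hz, hZ0 z hz⟩
  | succ M ih =>
    obtain ⟨Y, hY, hYI, hY0⟩ :=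
      exists_finset_zeros_of_hasDerivWithinAt (hg 0 (by omega)) (M + 1) hZ hZI hZ0
    exact ih (g := fun k => g (k + 1)) (fun k hk => hg (k + 1) (by omega)) hY hYI hY0

theorem iterate_derivative_nodal_card (s : Finset ℕ) (v : ℕ → ℝ) :
    Polynomial.derivative^[s.card] (Lagrange.nodal s v) =
      Polynomial.C (s.card.factorial : ℝ) := by
  have hd : (Polynomial.derivative^[s.card] (Lagrange.nodal s v)).natDegree ≤ 0 := by
    refine (Polynomial.natDegree_iterate_derivative _ _).trans ?_
    simp [Lagrange.natDegree_nodal]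
  rw [Polynomial.eq_C_of_natDegree_le_zero hd, Polynomial.coeff_iterate_derivative, zero_add,
    Nat.descFactorial_self]
  have : (Lagrange.nodal s v).coeff s.card = 1 := by
    simpa [Polynomial.Monic, Polynomial.leadingCoeff, Lagrange.natDegree_nodal] using
      Lagrange.nodal_monic (s := s) (v := v)
  simp [this]

/-- The error bound for Lagrange interpolation in one variable. -/
theorem abs_sub_lagrange_le {a b : ℝ} {g : ℕ → ℝ → ℝ} {s : Finset ℕ} {v : ℕ → ℝ} {y C : ℝ}
    (hg : ∀ k < s.card, ∀ u ∈ Set.Icc a b,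
      HasDerivWithinAt (g k) (g (k + 1) u) (Set.Icc a b) u)
    (hv : Set.InjOn v s) (hvI : ∀ k ∈ s, v k ∈ Set.Icc a b) (hy : y ∈ Set.Icc a b)
    (hC : ∀ u ∈ Set.Icc a b, |g s.card u| ≤ C) :
    |g 0 y - ∑ k ∈ s, g 0 (v k) * lagrangeWeight s v y k| ≤ C * ∏ k ∈ s, |y - v k| := by
  have hC0 : 0 ≤ C := (abs_nonneg _).trans (hC y hy)
  rw [← eval_interpolate_eq_sum_lagrangeWeight s v (fun k => g 0 (v k))]
  set P := Lagrange.interpolate s v (fun k => g 0 (v k)) with hP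
  have hPv : ∀ k ∈ s, P.eval (v k) = g 0 (v k) := fun k hk =>
    Lagrange.eval_interpolate_at_node _ hv hk
  by_cases hnode : ∃ k ∈ s, y = v k
  · obtain ⟨k, hk, rfl⟩ := hnode
    rw [hPv k hk, sub_self, abs_zero]
    exact mul_nonneg hC0 (Finset.prod_nonneg fun _ _ => abs_nonneg _)
  push Not at hnode
  set W := Lagrange.nodal s v with hW
  have hWy : W.eval y ≠ 0 := by
    rw [hW, Lagrange.eval_nodal]
    exact Finset.prod_ne_zero_iff.2 fun k hk => sub_ne_zero.2 (hnode k hk)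
  set c := (g 0 y - P.eval y) / W.eval y with hc
  set R := P + Polynomial.C c * W with hR
  have hRM : Polynomial.derivative^[s.card] R = Polynomial.C (c * s.card.factorial) := by
    rw [hR, iterate_map_add, Polynomial.iterate_derivative_C_mul, hW,
      iterate_derivative_nodal_card,
      Polynomial.iterate_derivative_eq_zero_of_degree_lt (Lagrange.degree_interpolate_lt _ hv),
      zero_add, Polynomial.C_mul]
  have hyim : y ∉ s.image v := by
    simp only [Finset.mem_image, not_exists, not_and]
    exact fun k hk h => hnode k hk h.symm
  obtain ⟨ξ, hξ, h0⟩ := exists_zero_of_hasDerivWithinAt_chain (a := a) (b := b) s.card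
    (g := fun k u => g k u - (Polynomial.derivative^[k] R).eval u)
    (Z := insert y (s.image v))
    (fun k hk u hu => by
      rw [Function.iterate_succ_apply']
      exact (hg k hk u hu).sub (Polynomial.hasDerivWithinAt _ _ _))
    (by rw [Finset.card_insert_of_notMem hyim, Finset.card_image_of_injOn hv])
    (by
      intro z hz
      rcases Finset.mem_insert.1 hz with rfl | hz
      · exact hy
      · obtain ⟨k, hk, rfl⟩ := Finset.mem_image.1 hz
        exact hvI k hk)
    (by
      intro z hz
      rcases Finset.mem_insert.1 hz with rfl | hz
      · simp [hR, hc, div_mul_cancel₀ _ hWy]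
      · obtain ⟨k, hk, rfl⟩ := Finset.mem_image.1 hz
        simp [hR, hPv k hk, hW, Lagrange.eval_nodal_at_node hk])
  simp only [hRM, Polynomial.eval_C, sub_eq_zero] at h0
  have hcC : |c| ≤ C := by
    have h1 := hC ξ hξ
    rw [h0, abs_mul, Nat.abs_cast] at h1
    have : (1 : ℝ) ≤ s.card.factorial := by exact_mod_cast Nat.one_le_iff_ne_zero.2 (by positivity)
    nlinarith [abs_nonneg c]
  have : g 0 y - P.eval y = c * W.eval y := by rw [hc, div_mul_cancel₀ _ hWy]
  rw [this, abs_mul, hW, Lagrange.eval_nodal, Finset.abs_prod]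
  gcongr

/-- The tensor-product Lagrange operator acting on the coordinates in `S` only: `F` is
interpolated at `xs` in these coordinates and evaluated at `z` in the others. -/
noncomputable def partialTensorLag {n : ℕ} (s : Fin n → Finset ℕ) (x : Fin n → ℕ → ℝ)
    (xs : Fin n → ℝ) (S : Finset (Fin n)) (F : (Fin n → ℝ) → ℝ) (z : Fin n → ℝ) : ℝ :=
  ∑ l ∈ Fintype.piFinset s, F (S.piecewise (fun q => x q (l q)) z) *
    ∏ q, lagrangeWeight (s q) (x q) (xs q) (l q)

theorem partialTensorLag_univ {n : ℕ} (s : Fin n → Finset ℕ) (x : Fin n → ℕ → ℝ)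
    (xs : Fin n → ℝ) (F : (Fin n → ℝ) → ℝ) (z : Fin n → ℝ) :
    partialTensorLag s x xs Finset.univ F z = tensorLagEval n s x F xs := by
  simp [partialTensorLag, tensorLagEval, lagrangeWeight, Finset.piecewise_univ]

theorem partialTensorLag_empty {n : ℕ} {s : Fin n → Finset ℕ} {x : Fin n → ℕ → ℝ}
    (hx : ∀ q, Set.InjOn (x q) (s q)) (hs : ∀ q, (s q).Nonempty)
    (xs : Fin n → ℝ) (F : (Fin n → ℝ) → ℝ) (z : Fin n → ℝ) :
    partialTensorLag s x xs ∅ F z = F z := by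
  simp only [partialTensorLag, Finset.piecewise_empty]
  rw [← Finset.mul_sum, ← Finset.prod_univ_sum s fun q k => lagrangeWeight (s q) (x q) (xs q) k,
    Finset.prod_eq_one fun q _ => sum_lagrangeWeight (hx q) (hs q) _, mul_one]

theorem partialTensorLag_insert {n : ℕ} {s : Fin n → Finset ℕ} {x : Fin n → ℕ → ℝ}
    {S : Finset (Fin n)} {q : Fin n} (hq : q ∉ S) (hx : Set.InjOn (x q) (s q))
    (hs : (s q).Nonempty) (xs : Fin n → ℝ) (F : (Fin n → ℝ) → ℝ) (z : Fin n → ℝ) :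
    partialTensorLag s x xs (insert q S) F z =
      ∑ k ∈ s q, partialTensorLag s x xs S F (Function.update z q (x q k)) *
        lagrangeWeight (s q) (x q) (xs q) k := by
  have hW : ∀ (l : Fin n → ℕ) (k : ℕ),
      ∏ q', lagrangeWeight (s q') (x q') (xs q') (Function.update l q k q') =
        lagrangeWeight (s q) (x q) (xs q) k *
          ∏ q' ∈ Finset.univ.erase q, lagrangeWeight (s q') (x q') (xs q') (l q') := by
    intro l k
    rw [← Finset.mul_prod_erase _ _ (Finset.mem_univ q), Function.update_self]
    congr 1
    exact Finset.prod_congr rfl fun q' hq' => by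
      rw [Function.update_of_ne (Finset.ne_of_mem_erase hq')]
  have hl : partialTensorLag s x xs (insert q S) F z =
      ∑ k ∈ s q, ∑ l ∈ Fintype.piFinset s,
        F ((insert q S).piecewise (fun q => x q (l q)) z) *
          (∏ q, lagrangeWeight (s q) (x q) (xs q) (l q)) *
          lagrangeWeight (s q) (x q) (xs q) k := by
    rw [Finset.sum_comm]
    simp only [← Finset.mul_sum, sum_lagrangeWeight hx hs, mul_one]
    rfl
  rw [hl]
  simp only [partialTensorLag, Finset.sum_mul]
  rw [← Finset.sum_product', ← Finset.sum_product']
  refine Finset.sum_nbij' (fun kl => (kl.2 q, Function.update kl.2 q kl.1))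
    (fun kl => (kl.2 q, Function.update kl.2 q kl.1)) ?_ ?_ ?_ ?_ ?_
  iterate 2
    rintro ⟨k, l⟩ h
    simp only [Finset.mem_product, Fintype.mem_piFinset] at h ⊢
    refine ⟨h.2 q, fun q' => ?_⟩
    rcases eq_or_ne q' q with rfl | hne
    · simpa using h.1
    · simpa [hne] using h.2 q'
  iterate 2
    rintro ⟨k, l⟩ -
    simp
  · rintro ⟨k, l⟩ -
    simp only [hW]
    have hl := hW l (l q)
    rw [Function.update_eq_self] at hl
    rw [hl]
    have : (insert q S).piecewise (fun q => x q (l q)) z =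
        S.piecewise (fun q' => x q' (Function.update l q k q'))
          (Function.update z q (x q (l q))) := by
      funext q'
      rcases eq_or_ne q' q with rfl | hne
      · simp [hq]
      · simp [Finset.piecewise, hne]
    rw [this]
    ring

/-- Partial derivative in the coordinate `q`, taken within the set `D`. -/
noncomputable def partialDerivWithin {n : ℕ} (D : Set (Fin n → ℝ)) (q : Fin n)
    (F : (Fin n → ℝ) → ℝ) (z : Fin n → ℝ) : ℝ :=
  fderivWithin ℝ F D z (Pi.single q 1)

theorem ContDiffOn.iterate_partialDerivWithin {n : ℕ} {D : Set (Fin n → ℝ)}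
    (hD : UniqueDiffOn ℝ D) (q : Fin n) (k m : ℕ) {F : (Fin n → ℝ) → ℝ}
    (hF : ContDiffOn ℝ ((m + k : ℕ) : WithTop ℕ∞) F D) :
    ContDiffOn ℝ (m : WithTop ℕ∞) ((partialDerivWithin D q)^[k] F) D := by
  induction k generalizing F with
  | zero => simpa using hF
  | succ k ih =>
    rw [Function.iterate_succ_apply]
    refine ih ?_
    have h := hF.fderivWithin (m := ((m + k : ℕ) : WithTop ℕ∞)) hD (by exact_mod_cast le_rfl)
    exact h.clm_apply contDiffOn_const

theorem update_mem_box {n : ℕ} {a b : Fin n → ℝ} {z : Fin n → ℝ} {q : Fin n} {u : ℝ}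
    (hz : z ∈ Set.univ.pi fun q => Set.Icc (a q) (b q)) (hu : u ∈ Set.Icc (a q) (b q)) :
    Function.update z q u ∈ Set.univ.pi fun q => Set.Icc (a q) (b q) := by
  intro q' _
  rcases eq_or_ne q' q with rfl | hne
  · simpa using hu
  · simpa [hne] using hz q' trivial

theorem hasDerivWithinAt_comp_update {n : ℕ} {a b : Fin n → ℝ} {F : (Fin n → ℝ) → ℝ}
    (hF : ContDiffOn ℝ 1 F (Set.univ.pi fun q => Set.Icc (a q) (b q))) {z : Fin n → ℝ}
    (hz : z ∈ Set.univ.pi fun q => Set.Icc (a q) (b q)) {q : Fin n} {u : ℝ}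
    (hu : u ∈ Set.Icc (a q) (b q)) :
    HasDerivWithinAt (fun u => F (Function.update z q u))
      (partialDerivWithin (Set.univ.pi fun q => Set.Icc (a q) (b q)) q F
        (Function.update z q u)) (Set.Icc (a q) (b q)) u := by
  have h1 := (hF.differentiableOn one_ne_zero _ (update_mem_box hz hu)).hasFDerivWithinAt
  exact h1.comp_hasDerivWithinAt u (hasDerivAt_update z q u).hasDerivWithinAt
    fun u' hu' => update_mem_box hz hu'

/-- The error of tensor-product Lagrange interpolation in the coordinates in `S`, with `M` nodes
in every coordinate. The bound does not depend on how unevenly the nodes are spaced. -/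
theorem exists_partialTensorLag_error {n : ℕ} {a b : Fin n → ℝ} (hab : ∀ q, a q < b q) {M : ℕ}
    (hM : 0 < M) {c : ℝ} (hc : 0 ≤ c) (S : Finset (Fin n)) :
    ∀ F : (Fin n → ℝ) → ℝ,
      ContDiffOn ℝ ((S.card * M : ℕ) : WithTop ℕ∞) F
        (Set.univ.pi fun q => Set.Icc (a q) (b q)) →
      ∃ K : ℝ, 0 ≤ K ∧ ∀ (s : Fin n → Finset ℕ) (x : Fin n → ℕ → ℝ) (xs : Fin n → ℝ) (h : ℝ),
        0 ≤ h → h ≤ 1 → (∀ q, (s q).card = M) → (∀ q, Set.InjOn (x q) (s q)) →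
        (∀ q, ∀ k ∈ s q, x q k ∈ Set.Icc (a q) (b q)) →
        (∀ q, xs q ∈ Set.Icc (a q) (b q)) →
        (∀ q, ∀ k ∈ s q, |xs q - x q k| ≤ c * h) →
        ∀ z ∈ Set.univ.pi fun q => Set.Icc (a q) (b q),
          |partialTensorLag s x xs S F z - F (S.piecewise xs z)| ≤ K * h ^ M := by
  have hD : UniqueDiffOn ℝ (Set.univ.pi fun q => Set.Icc (a q) (b q)) :=
    UniqueDiffOn.univ_pi fun q => uniqueDiffOn_Icc (hab q)
  have hcpt : IsCompact (Set.univ.pi fun q => Set.Icc (a q) (b q)) :=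
    isCompact_univ_pi fun _ => isCompact_Icc
  induction S using Finset.induction_on with
  | empty =>
    intro F _
    refine ⟨0, le_rfl, fun s x xs h _ _ hs hx _ _ _ z _ => ?_⟩
    rw [partialTensorLag_empty hx fun q => Finset.card_pos.1 (by rw [hs q]; exact hM)]
    simp
  | insert q S hq ih =>
    intro F hF
    rw [Finset.card_insert_of_notMem hq, add_mul, one_mul] at hF
    set D := Set.univ.pi fun q => Set.Icc (a q) (b q) with hDdef
    have hF' := hF.iterate_partialDerivWithin hD q M (S.card * M)
    obtain ⟨K₁, hK₁, h₁⟩ := ih F (hF.of_le (by exact_mod_cast Nat.le_add_right _ _))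
    obtain ⟨K₂, hK₂, h₂⟩ := ih _ hF'
    obtain ⟨C, hC⟩ := hcpt.exists_bound_of_continuousOn hF'.continuousOn
    have hC0 : 0 ≤ C := (norm_nonneg _).trans (hC a fun q _ => ⟨le_rfl, (hab q).le⟩)
    refine ⟨K₁ + (C + K₂) * c ^ M, by positivity,
      fun s x xs h h0 hle hs hx hxI hxsI hdist z hz => ?_⟩
    have hne : ∀ q, (s q).Nonempty := fun q => Finset.card_pos.1 (by rw [hs q]; exact hM)
    have hins : (insert q S).piecewise xs z = S.piecewise xs (Function.update z q (xs q)) := by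
      funext q'
      rcases eq_or_ne q' q with rfl | hne
      · simp [hq]
      · simp [Finset.piecewise, hne]
    have hupd : ∀ (y : Fin n → ℝ) (u : ℝ), S.piecewise y (Function.update z q u) =
        Function.update (S.piecewise y z) q u := by
      intro y u
      funext q'
      rcases eq_or_ne q' q with rfl | hne
      · simp [hq]
      · simp [Finset.piecewise, hne]
    have hbox : ∀ y : Fin n → ℝ, (∀ q, y q ∈ Set.Icc (a q) (b q)) → ∀ z ∈ D,
        S.piecewise y z ∈ D := by
      intro y hy z hz q' _
      by_cases hq' : q' ∈ S
      · simpa [hq'] using hy q'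
      · simpa [hq'] using hz q' trivial
    have herr := abs_sub_lagrange_le (a := a q) (b := b q) (s := s q) (v := x q) (y := xs q)
      (C := C + K₂)
      (g := fun k u => partialTensorLag s x xs S ((partialDerivWithin D q)^[k] F)
        (Function.update z q u))
      (fun k hk u hu => by
        rw [hs q] at hk
        simp only [partialTensorLag, hupd, Function.iterate_succ_apply']
        refine HasDerivWithinAt.fun_sum fun l hl => ?_
        refine HasDerivWithinAt.mul_const ?_ _
        refine hasDerivWithinAt_comp_update ?_
          (hbox _ (fun q' => hxI q' _ (Fintype.mem_piFinset.1 hl q')) z hz) hu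
        have := ContDiffOn.iterate_partialDerivWithin hD q k 1 (F := F)
          (hF.of_le (by exact_mod_cast (by omega : 1 + k ≤ S.card * M + M)))
        exact_mod_cast this)
      (hx q) (hxI q) (hxsI q)
      (fun u hu => by
        have hz' := update_mem_box hz hu
        rw [hs q]
        have e1 := h₂ s x xs h h0 hle hs hx hxI hxsI hdist _ hz'
        have e2 := hC _ (hbox xs hxsI _ hz')
        rw [Real.norm_eq_abs] at e2
        have e3 : K₂ * h ^ M ≤ K₂ := mul_le_of_le_one_right hK₂ (pow_le_one₀ h0 hle)
        have e4 := abs_sub_abs_le_abs_sub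
          (partialTensorLag s x xs S ((partialDerivWithin D q)^[M] F) (Function.update z q u))
          ((partialDerivWithin D q)^[M] F (S.piecewise xs (Function.update z q u)))
        linarith)
    simp only [Function.iterate_zero, id] at herr
    rw [← partialTensorLag_insert hq (hx q) (hne q)] at herr
    have hprod : ∏ k ∈ s q, |xs q - x q k| ≤ (c * h) ^ M := by
      rw [← hs q, ← Finset.prod_const]
      exact Finset.prod_le_prod (fun _ _ => abs_nonneg _) (hdist q)
    have hbase := h₁ s x xs h h0 hle hs hx hxI hxsI hdist _ (update_mem_box hz (hxsI q))
    rw [← hins] at hbase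
    have hmul := mul_le_mul_of_nonneg_left hprod (add_nonneg hC0 hK₂)
    rw [abs_sub_comm] at herr
    calc _ ≤ _ := abs_sub_le _ _ _
      _ ≤ (C + K₂) * (c * h) ^ M + K₁ * h ^ M := add_le_add (herr.trans hmul) hbase
      _ = _ := by rw [mul_pow]; ring

theorem exists_tensorLagEval_error {n : ℕ} {a b : Fin n → ℝ} (hab : ∀ q, a q < b q) {M : ℕ}
    (hM : 0 < M) {c : ℝ} (hc : 0 ≤ c) {f : (Fin n → ℝ) → ℝ}
    (hf : ContDiffOn ℝ ((n * M : ℕ) : WithTop ℕ∞) f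
      (Set.univ.pi fun q => Set.Icc (a q) (b q))) :
    ∃ K : ℝ, 0 ≤ K ∧ ∀ (s : Fin n → Finset ℕ) (x : Fin n → ℕ → ℝ) (xs : Fin n → ℝ) (h : ℝ),
      0 ≤ h → h ≤ 1 → (∀ q, (s q).card = M) → (∀ q, Set.InjOn (x q) (s q)) →
      (∀ q, ∀ k ∈ s q, x q k ∈ Set.Icc (a q) (b q)) →
      (∀ q, xs q ∈ Set.Icc (a q) (b q)) →
      (∀ q, ∀ k ∈ s q, |xs q - x q k| ≤ c * h) →
      |tensorLagEval n s x f xs - f xs| ≤ K * h ^ M := by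
  obtain ⟨K, hK, hbound⟩ :=
    exists_partialTensorLag_error hab hM hc Finset.univ f (by simpa using hf)
  refine ⟨K, hK, fun s x xs h h0 h1 hs hx hxI hxsI hdist => ?_⟩
  have := hbound s x xs h h0 h1 hs hx hxI hxsI hdist xs fun q _ => hxsI q
  rwa [partialTensorLag_univ, Finset.piecewise_univ] at this

/-- Neville's recursion for tensor-product Lagrange interpolation. -/
theorem tensorLagEval_eq_sum {n : ℕ} {s : Fin n → Finset ℕ} {V : Finset ℕ}
    {σ : Fin n → ℕ → Finset ℕ} {c : Fin n → ℕ → ℝ} {x : Fin n → ℕ → ℝ} {xs : Fin n → ℝ}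
    (hσ : ∀ q, ∀ v ∈ V, σ q v ⊆ s q)
    (hw : ∀ q, ∀ k ∈ s q, lagrangeWeight (s q) (x q) (xs q) k =
      ∑ v ∈ V, c q v *
        if k ∈ σ q v then lagrangeWeight (σ q v) (x q) (xs q) k else 0)
    (f : (Fin n → ℝ) → ℝ) :
    tensorLagEval n s x f xs = ∑ v ∈ Fintype.piFinset fun _ : Fin n => V,
      (∏ q, c q (v q)) * tensorLagEval n (fun q => σ q (v q)) x f xs := by
  have hext : ∀ v ∈ Fintype.piFinset fun _ : Fin n => V,
      tensorLagEval n (fun q => σ q (v q)) x f xs =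
        ∑ l ∈ Fintype.piFinset s, f (fun q => x q (l q)) *
          ∏ q, if l q ∈ σ q (v q) then
            lagrangeWeight (σ q (v q)) (x q) (xs q) (l q) else 0 := by
    intro v hv
    rw [Fintype.mem_piFinset] at hv
    refine Eq.trans ?_ (Finset.sum_subset
      (Fintype.piFinset_subset _ _ fun q => hσ q _ (hv q)) ?_)
    · refine Finset.sum_congr rfl fun l hl => ?_
      rw [Fintype.mem_piFinset] at hl
      simp only [hl, if_true, lagrangeWeight]
    · intro l _ hl
      rw [Fintype.mem_piFinset, not_forall] at hl
      obtain ⟨q, hq⟩ := hl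
      rw [Finset.prod_eq_zero (Finset.mem_univ q) (if_neg hq), mul_zero]
  rw [Finset.sum_congr rfl fun v hv => by rw [hext v hv]]
  simp only [Finset.mul_sum]
  rw [Finset.sum_comm]
  refine Finset.sum_congr rfl fun l hl => ?_
  rw [Fintype.mem_piFinset] at hl
  have : ∏ q, lagrangeWeight (s q) (x q) (xs q) (l q) =
      ∏ q, ∑ v ∈ V, c q v *
        if l q ∈ σ q v then lagrangeWeight (σ q v) (x q) (xs q) (l q) else 0 :=
    Finset.prod_congr rfl fun q _ => hw q _ (hl q)
  change _ * ∏ q, lagrangeWeight (s q) (x q) (xs q) (l q) = _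
  rw [this, Finset.prod_univ_sum, Finset.mul_sum]
  refine Finset.sum_congr rfl fun v _ => ?_
  rw [Finset.prod_mul_distrib]
  ring

/-- The optimal linear weight of the left (`v = 0`) or right (`v ≠ 0`) substencil of the stencil
with first node `α` and last node `β`. -/
noncomputable def nevilleWeight (α β y : ℝ) (v : ℕ) : ℝ :=
  if v = 0 then (y - β) / (α - β) else 1 - (y - β) / (α - β)

theorem nevilleWeight_nonneg {α β y : ℝ} (h1 : α < y) (h2 : y < β) (v : ℕ) :
    0 ≤ nevilleWeight α β y v := by
  have hp : 0 < β - α := by linarith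
  have : (y - β) / (α - β) = (β - y) / (β - α) := by
    rw [← neg_div_neg_eq, neg_sub, neg_sub]
  unfold nevilleWeight
  rw [this]
  split_ifs
  · exact div_nonneg (by linarith) hp.le
  · rw [sub_nonneg, div_le_one hp]
    linarith

theorem sum_prod_nevilleWeight {n : ℕ} (α β y : Fin n → ℝ) :
    ∑ v ∈ Fintype.piFinset (fun _ : Fin n => ({0, 1} : Finset ℕ)),
      ∏ q, nevilleWeight (α q) (β q) (y q) (v q) = 1 := by
  rw [← Finset.prod_univ_sum (fun _ : Fin n => ({0, 1} : Finset ℕ))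
    fun q v => nevilleWeight (α q) (β q) (y q) v]
  simp [nevilleWeight]

theorem tensorLagEval_Icc_succ {n : ℕ} {x : Fin n → ℕ → ℝ} {p : Fin n → ℕ} {m : ℕ}
    (hx : ∀ q, Set.InjOn (x q) (Finset.Icc (p q) (p q + m + 1) : Finset ℕ)) (xs : Fin n → ℝ)
    (f : (Fin n → ℝ) → ℝ) :
    tensorLagEval n (fun q => Finset.Icc (p q) (p q + m + 1)) x f xs =
      ∑ v ∈ Fintype.piFinset (fun _ : Fin n => ({0, 1} : Finset ℕ)),
        (∏ q, nevilleWeight (x q (p q)) (x q (p q + m + 1)) (xs q) (v q)) *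
          tensorLagEval n (fun q => Finset.Icc (p q + v q) (p q + v q + m)) x f xs := by
  refine tensorLagEval_eq_sum (σ := fun q v => Finset.Icc (p q + v) (p q + v + m))
    (c := fun q v => nevilleWeight (x q (p q)) (x q (p q + m + 1)) (xs q) v) ?_ ?_ f
  · intro q v hv
    have : v = 0 ∨ v = 1 := by simpa using hv
    exact Finset.Icc_subset_Icc (by omega) (by omega)
  · intro q k hk
    have h0 : (Finset.Icc (p q) (p q + m + 1)).erase (p q + m + 1) =
        Finset.Icc (p q + 0) (p q + 0 + m) := by
      ext; simp only [Finset.mem_erase, Finset.mem_Icc]; omega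
    have h1 : (Finset.Icc (p q) (p q + m + 1)).erase (p q) =
        Finset.Icc (p q + 1) (p q + 1 + m) := by
      ext; simp only [Finset.mem_erase, Finset.mem_Icc]; omega
    rw [lagrangeWeight_neville (hx q) (p := p q) (q := p q + m + 1)
      (by simp only [Finset.mem_Icc]; omega) (by simp only [Finset.mem_Icc]; omega)
      (by omega) (xs q) hk, h0, h1, Finset.sum_pair zero_ne_one]
    simp only [nevilleWeight, if_true, one_ne_zero, if_false]
    ring

theorem abs_rpow_neg_sub_le {t : ℝ} (ht : 0 < t) {u w : ℝ} (hu : 0 ≤ u) (hw : 0 ≤ w) :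
    |(1 + u) ^ (-t) - (1 + w) ^ (-t)| ≤ t * |u - w| := by
  have := Convex.norm_image_sub_le_of_norm_hasDerivWithin_le (𝕜 := ℝ) (C := t)
    (f := fun u : ℝ => (1 + u) ^ (-t)) (f' := fun u => (-t) * (1 + u) ^ (-t - 1))
    (s := Set.Ici 0) (x := w) (y := u)
    (fun u hu => by
      have hu' : (0 : ℝ) ≤ u := hu
      have h1 := ((hasDerivAt_id u).const_add 1).rpow_const (p := -t)
        (Or.inl (by simp only [id]; positivity))
      simpa using h1.hasDerivWithinAt)
    (fun u hu => by
      have hu' : (0 : ℝ) ≤ u := hu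
      have h1 : (1 + u) ^ (-t - 1) ≤ 1 :=
        Real.rpow_le_one_of_one_le_of_nonpos (by linarith) (by linarith)
      have h2 : 0 ≤ (1 + u) ^ (-t - 1) := by positivity
      rw [norm_mul, norm_neg, Real.norm_of_nonneg ht.le, Real.norm_of_nonneg h2]
      exact mul_le_of_le_one_right ht.le h1)
    (convex_Ici 0) hw hu
  simpa [Real.norm_eq_abs] using this

/-- On smooth data the nonlinear weights are close to the optimal linear weights `c`. -/
theorem abs_weno_weight_sub_le {ι : Type*} {V : Finset ι} {c J : ι → ℝ} {t A h ρ : ℝ}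
    (ht : 0 < t) (hA : 0 ≤ A) (hh : 0 < h) (hc : ∀ v ∈ V, 0 ≤ c v) (hc1 : ∑ v ∈ V, c v = 1)
    (hJ : ∀ v ∈ V, 0 ≤ J v ∧ J v ≤ A * h ^ 2)
    (hJJ : ∀ v ∈ V, ∀ w ∈ V, |J v - J w| ≤ A * h ^ 2 * ρ) :
    (∀ v ∈ V, 0 ≤ c v / (h ^ 2 + J v) ^ t / ∑ w ∈ V, c w / (h ^ 2 + J w) ^ t) ∧
    ∑ v ∈ V, c v / (h ^ 2 + J v) ^ t / ∑ w ∈ V, c w / (h ^ 2 + J w) ^ t = 1 ∧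
    ∀ v ∈ V, |c v / (h ^ 2 + J v) ^ t / (∑ w ∈ V, c w / (h ^ 2 + J w) ^ t) - c v| ≤
      c v * (t * A * (1 + A) ^ t * ρ) := by
  set u : ι → ℝ := fun v => J v / h ^ 2 with hu
  set G : ι → ℝ := fun v => (1 + u v) ^ (-t) with hG
  have hu0 : ∀ v ∈ V, 0 ≤ u v := fun v hv => div_nonneg (hJ v hv).1 (by positivity)
  have huA : ∀ v ∈ V, u v ≤ A := fun v hv => (div_le_iff₀ (by positivity)).2 (hJ v hv).2
  have huu : ∀ v ∈ V, ∀ w ∈ V, |u v - u w| ≤ A * ρ := by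
    intro v hv w hw
    have : u v - u w = (J v - J w) / h ^ 2 := by simp only [hu]; ring
    rw [this, abs_div, abs_of_pos (by positivity : 0 < h ^ 2), div_le_iff₀ (by positivity)]
    linarith [hJJ v hv w hw]
  have hscale : ∀ v ∈ V, c v / (h ^ 2 + J v) ^ t = ((h ^ 2) ^ t)⁻¹ * (c v * G v) := by
    intro v hv
    have h1 := hu0 v hv
    have : h ^ 2 + J v = h ^ 2 * (1 + u v) := by simp only [hu]; field_simp
    rw [this, Real.mul_rpow (by positivity) (by positivity), hG]
    simp only
    rw [Real.rpow_neg (by positivity)]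
    field_simp
  have hGpos : ∀ v ∈ V, 0 < G v := fun v hv => by have := hu0 v hv; positivity
  have hGlow : ∀ v ∈ V, (1 + A) ^ (-t) ≤ G v := fun v hv =>
    Real.rpow_le_rpow_of_nonpos (by linarith [hu0 v hv]) (by linarith [huA v hv]) (by linarith)
  set T := ∑ w ∈ V, c w * G w with hT
  have hTlow : (1 + A) ^ (-t) ≤ T := by
    calc (1 + A) ^ (-t) = ∑ w ∈ V, c w * (1 + A) ^ (-t) := by
          rw [← Finset.sum_mul, hc1, one_mul]
      _ ≤ T := Finset.sum_le_sum fun w hw => mul_le_mul_of_nonneg_left (hGlow w hw) (hc w hw)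
  have hTpos : 0 < T := lt_of_lt_of_le (by positivity) hTlow
  have hω : ∀ v ∈ V, c v / (h ^ 2 + J v) ^ t / ∑ w ∈ V, c w / (h ^ 2 + J w) ^ t =
      c v * G v / T := by
    intro v hv
    rw [Finset.sum_congr rfl hscale, ← Finset.mul_sum, hscale v hv]
    exact mul_div_mul_left _ _ (by positivity)
  refine ⟨fun v hv => ?_, ?_, fun v hv => ?_⟩
  · rw [hω v hv]
    exact div_nonneg (mul_nonneg (hc v hv) (hGpos v hv).le) hTpos.le
  · rw [Finset.sum_congr rfl hω, ← Finset.sum_div, div_self hTpos.ne']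
  · rw [hω v hv]
    have e1 : c v * G v / T - c v = c v * ((G v - T) / T) := by field_simp
    rw [e1, abs_mul, abs_of_nonneg (hc v hv)]
    refine mul_le_mul_of_nonneg_left ?_ (hc v hv)
    rw [abs_div, abs_of_pos hTpos, div_le_iff₀ hTpos]
    have e2 : G v - T = ∑ w ∈ V, c w * (G v - G w) := by
      simp only [mul_sub, Finset.sum_sub_distrib, ← Finset.sum_mul, hc1, one_mul, hT]
    have e3 : |G v - T| ≤ t * (A * ρ) := by
      rw [e2]
      calc _ ≤ ∑ w ∈ V, |c w * (G v - G w)| := Finset.abs_sum_le_sum_abs _ _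
        _ ≤ ∑ w ∈ V, c w * (t * (A * ρ)) := Finset.sum_le_sum fun w hw => by
          rw [abs_mul, abs_of_nonneg (hc w hw)]
          refine mul_le_mul_of_nonneg_left ?_ (hc w hw)
          exact (abs_rpow_neg_sub_le ht (hu0 v hv) (hu0 w hw)).trans
            (mul_le_mul_of_nonneg_left (huu v hv w hw) ht.le)
        _ = _ := by rw [← Finset.sum_mul, hc1, one_mul]
    have hAρ : 0 ≤ t * (A * ρ) := (abs_nonneg _).trans e3
    have e4 : 1 ≤ (1 + A) ^ t * T := by
      calc (1 : ℝ) = (1 + A) ^ t * (1 + A) ^ (-t) := by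
            rw [← Real.rpow_add (by linarith), add_neg_cancel, Real.rpow_zero]
        _ ≤ _ := mul_le_mul_of_nonneg_left hTlow (by positivity)
    calc |G v - T| ≤ t * (A * ρ) * 1 := by rw [mul_one]; exact e3
      _ ≤ t * (A * ρ) * ((1 + A) ^ t * T) := mul_le_mul_of_nonneg_left e4 hAρ
      _ = _ := by ring

theorem abs_sum_mul_sub_sum_mul_le {ι : Type*} {V : Finset ι} {c ω P Q : ι → ℝ}
    {F κ D E : ℝ} (hc1 : ∑ v ∈ V, c v = 1) (hω0 : ∀ v ∈ V, 0 ≤ ω v)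
    (hω1 : ∑ v ∈ V, ω v = 1) (hωc : ∀ v ∈ V, |ω v - c v| ≤ c v * κ)
    (hQP : ∀ v ∈ V, |Q v - P v| ≤ D) (hPF : ∀ v ∈ V, |P v - F| ≤ E) :
    |∑ v ∈ V, ω v * Q v - ∑ v ∈ V, c v * P v| ≤ D + κ * E := by
  have h1 : ∑ v ∈ V, ω v * Q v - ∑ v ∈ V, c v * P v =
      ∑ v ∈ V, ω v * (Q v - P v) + ∑ v ∈ V, (ω v - c v) * (P v - F) := by
    have h2 : ∑ v ∈ V, (ω v - c v) * F = 0 := by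
      rw [← Finset.sum_mul, Finset.sum_sub_distrib, hω1, hc1, sub_self, zero_mul]
    rw [← add_zero (_ + _), ← h2]
    simp only [← Finset.sum_add_distrib, ← Finset.sum_sub_distrib]
    exact Finset.sum_congr rfl fun v _ => by ring
  rw [h1]
  refine (abs_add_le _ _).trans (add_le_add ?_ ?_)
  · calc _ ≤ ∑ v ∈ V, |ω v * (Q v - P v)| := Finset.abs_sum_le_sum_abs _ _
      _ ≤ ∑ v ∈ V, ω v * D := Finset.sum_le_sum fun v hv => by
        rw [abs_mul, abs_of_nonneg (hω0 v hv)]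
        exact mul_le_mul_of_nonneg_left (hQP v hv) (hω0 v hv)
      _ = D := by rw [← Finset.sum_mul, hω1, one_mul]
  · calc _ ≤ ∑ v ∈ V, |(ω v - c v) * (P v - F)| := Finset.abs_sum_le_sum_abs _ _
      _ ≤ ∑ v ∈ V, c v * (κ * E) := Finset.sum_le_sum fun v hv => by
        rw [abs_mul, ← mul_assoc]
        exact mul_le_mul (hωc v hv) (hPF v hv) (abs_nonneg _)
          ((abs_nonneg _).trans (hωc v hv))
      _ = κ * E := by rw [← Finset.sum_mul, hc1, one_mul]

theorem sub_le_mul_of_mesh {x : ℕ → ℝ} {N : ℕ} {h : ℝ}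
    (hx : ∀ k, 1 ≤ k → k ≤ N → x k - x (k - 1) ≤ h) (k d : ℕ) (hk : k + d ≤ N) :
    x (k + d) - x k ≤ d * h := by
  induction d with
  | zero => simp
  | succ d ih =>
    have h1 := hx (k + (d + 1)) (by omega) hk
    have h2 := ih (by omega)
    rw [show k + (d + 1) - 1 = k + d by omega] at h1
    push_cast
    linarith

/-- One level of the progressive recursion adds to the distance from the tensor-product Lagrange
interpolant at most the product of the weight error and the interpolation error. -/
theorem abs_weno_step_sub_tensorLagEval_le {n m : ℕ} {x : Fin n → ℕ → ℝ} {p : Fin n → ℕ}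
    {xs : Fin n → ℝ} {f : (Fin n → ℝ) → ℝ} {J q₀ : (Fin n → ℕ) → ℝ} {t A h ρ D E F : ℝ}
    (hx : ∀ q, Set.InjOn (x q) (Finset.Icc (p q) (p q + m + 1) : Finset ℕ))
    (hlo : ∀ q, x q (p q) < xs q) (hhi : ∀ q, xs q < x q (p q + m + 1))
    (ht : 0 < t) (hA : 0 ≤ A) (hh : 0 < h)
    (hJ : ∀ v ∈ Fintype.piFinset (fun _ : Fin n => ({0, 1} : Finset ℕ)),
      0 ≤ J v ∧ J v ≤ A * h ^ 2)
    (hJJ : ∀ v ∈ Fintype.piFinset (fun _ : Fin n => ({0, 1} : Finset ℕ)),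
      ∀ w ∈ Fintype.piFinset (fun _ : Fin n => ({0, 1} : Finset ℕ)),
        |J v - J w| ≤ A * h ^ 2 * ρ)
    (hQP : ∀ v ∈ Fintype.piFinset (fun _ : Fin n => ({0, 1} : Finset ℕ)),
      |q₀ v - tensorLagEval n (fun q => Finset.Icc (p q + v q) (p q + v q + m)) x f xs| ≤ D)
    (hPF : ∀ v ∈ Fintype.piFinset (fun _ : Fin n => ({0, 1} : Finset ℕ)),
      |tensorLagEval n (fun q => Finset.Icc (p q + v q) (p q + v q + m)) x f xs - F| ≤ E) :
    |∑ v ∈ Fintype.piFinset (fun _ : Fin n => ({0, 1} : Finset ℕ)),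
        (∏ q, nevilleWeight (x q (p q)) (x q (p q + m + 1)) (xs q) (v q)) / (h ^ 2 + J v) ^ t /
          (∑ w ∈ Fintype.piFinset (fun _ : Fin n => ({0, 1} : Finset ℕ)),
            (∏ q, nevilleWeight (x q (p q)) (x q (p q + m + 1)) (xs q) (w q)) /
              (h ^ 2 + J w) ^ t) * q₀ v -
      tensorLagEval n (fun q => Finset.Icc (p q) (p q + m + 1)) x f xs| ≤
        D + t * A * (1 + A) ^ t * ρ * E := by
  have hc1 := sum_prod_nevilleWeight (fun q => x q (p q)) (fun q => x q (p q + m + 1)) xs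
  obtain ⟨hω0, hω1, hωc⟩ := abs_weno_weight_sub_le ht hA hh
    (fun v _ => Finset.prod_nonneg fun q _ => nevilleWeight_nonneg (hlo q) (hhi q) (v q))
    hc1 hJ hJJ
  rw [tensorLagEval_Icc_succ hx]
  exact abs_sum_mul_sub_sum_mul_le hc1 hω0 hω1 hωc hQP hPF

theorem stmt14 (n : ℕ) (hn : 1 ≤ n) (r : ℕ) (hr : 2 ≤ r) (t : ℝ) (ht : 0 < t)
    (a b : Fin n → ℝ) (hab : ∀ q, a q < b q)
    (f : (Fin n → ℝ) → ℝ)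
    (hf : ContDiffOn ℝ (2 * n * r) f (Set.univ.pi fun q => Set.Icc (a q) (b q)))
    (A : ℝ) (hA : 0 < A) :
    ∃ B > 0, ∃ h₀ > 0,
      ∀ (N : Fin n → ℕ) (x : Fin n → ℕ → ℝ) (h : ℝ) (i : Fin n → ℕ)
        (xs : Fin n → ℝ) (I : (Fin n → ℕ) → ℝ) (Q : ℕ → (Fin n → ℕ) → ℝ),
        (∀ q, a q ≤ x q 0) → (∀ q, x q (N q) ≤ b q) →
        (∀ q : Fin n, ∀ k k' : ℕ, k < k' → k' ≤ N q → x q k < x q k') →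
        (∀ (q : Fin n) (k : ℕ), 1 ≤ k → k ≤ N q → x q k - x q (k - 1) ≤ h) →
        (∃ (q : Fin n) (k : ℕ), 1 ≤ k ∧ k ≤ N q ∧ x q k - x q (k - 1) = h) →
        h ≤ h₀ →
        (∀ q, r ≤ i q ∧ i q + r ≤ N q + 1) →
        (∀ q, x q (i q - 1) < xs q ∧ xs q < x q (i q)) →
        (∀ k : Fin n → ℕ, (∀ q, k q < r) → 0 ≤ I k ∧ I k ≤ A * h ^ 2) →
        (∀ k k' : Fin n → ℕ, (∀ q, k q < r) → (∀ q, k' q < r) →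
          |I k - I k'| ≤ A * h ^ (r + 1)) →
        (∀ k : Fin n → ℕ, (∀ q, k q < r) →
          Q r k = tensorLagEval n (fun q => Finset.Icc (i q - r + k q) (i q + k q)) x f xs) →
        (∀ (l : ℕ) (j : Fin n → ℕ), r ≤ l → l + 2 ≤ 2 * r → (∀ q, j q + l + 2 ≤ 2 * r) →
          Q (l + 1) j =
            ∑ v ∈ Fintype.piFinset (fun _ : Fin n => ({0, 1} : Finset ℕ)),
              (wenoAlpha n r x i xs h t I l j v /
                  ∑ w ∈ Fintype.piFinset (fun _ : Fin n => ({0, 1} : Finset ℕ)),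
                    wenoAlpha n r x i xs h t I l j w) *
                Q l (fun q => j q + v q)) →
        |Q (2 * r - 1) (fun _ => 0) - f xs| ≤ B * h ^ (2 * r) := by
  have hE : ∀ l, ∃ E : ℝ, 0 ≤ E ∧ (l + 1 ≤ 2 * r →
      ∀ (s : Fin n → Finset ℕ) (x : Fin n → ℕ → ℝ) (xs : Fin n → ℝ) (h : ℝ),
      0 ≤ h → h ≤ 1 → (∀ q, (s q).card = l + 1) → (∀ q, Set.InjOn (x q) (s q)) →
      (∀ q, ∀ k ∈ s q, x q k ∈ Set.Icc (a q) (b q)) →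
      (∀ q, xs q ∈ Set.Icc (a q) (b q)) →
      (∀ q, ∀ k ∈ s q, |xs q - x q k| ≤ (2 * r : ℕ) * h) →
      |tensorLagEval n s x f xs - f xs| ≤ E * h ^ (l + 1)) := by
    intro l
    by_cases hl : l + 1 ≤ 2 * r
    · have hle : n * (l + 1) ≤ 2 * n * r := by
        calc n * (l + 1) ≤ n * (2 * r) := Nat.mul_le_mul_left n hl
          _ = 2 * n * r := by ring
      obtain ⟨E, hE0, hE⟩ := exists_tensorLagEval_error hab (Nat.succ_pos l)
        (c := (2 * r : ℕ)) (Nat.cast_nonneg _) (hf.of_le (by exact_mod_cast hle))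
      exact ⟨E, hE0, fun _ => hE⟩
    · exact ⟨0, le_rfl, fun h => absurd h hl⟩
  choose E hE0 hE using hE
  set κ : ℝ := t * A * (1 + A) ^ t with hκ
  have hκ0 : 0 ≤ κ := by positivity
  set D : ℕ → ℝ := fun d => ∑ m ∈ Finset.range d, κ * E (r + m) with hD
  have hD0 : ∀ d, 0 ≤ D d := fun d => Finset.sum_nonneg fun m _ => mul_nonneg hκ0 (hE0 _)
  refine ⟨D (r - 1) + E (2 * r - 1) + 1, by linarith [hD0 (r - 1), hE0 (2 * r - 1)],
    1, one_pos, ?_⟩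
  intro N x h i xs I Q hxa hxb hmono hmesh hmax hh1 hi hxs hI hII hQr hQ
  have hh : 0 < h := by
    obtain ⟨q, k, hk, hkN, rfl⟩ := hmax
    exact sub_pos.2 (hmono q _ _ (by omega) hkN)
  have hmono' : ∀ q k k', k ≤ k' → k' ≤ N q → x q k ≤ x q k' := by
    intro q k k' hk hk'
    rcases hk.eq_or_lt with rfl | hk
    · exact le_rfl
    · exact (hmono q k k' hk hk').le
  have hxI : ∀ q k, k ≤ N q → x q k ∈ Set.Icc (a q) (b q) := fun q k hk =>
    ⟨(hxa q).trans (hmono' q 0 k (Nat.zero_le _) hk), (hmono' q k (N q) hk le_rfl).trans (hxb q)⟩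
  have hxsI : ∀ q, xs q ∈ Set.Icc (a q) (b q) := fun q => by
    have := hi q
    exact ⟨(hxI q (i q - 1) (by omega)).1.trans (hxs q).1.le,
      (hxs q).2.le.trans (hxI q (i q) (by omega)).2⟩
  have hinj : ∀ (q : Fin n) (s : Finset ℕ), (∀ k ∈ s, k ≤ N q) → Set.InjOn (x q) s := by
    intro q s hs k hk k' hk' hkk
    rcases lt_trichotomy k k' with hlt | heq | hlt
    · exact absurd hkk (hmono q _ _ hlt (hs _ hk')).ne
    · exact heq
    · exact absurd hkk (hmono q _ _ hlt (hs _ hk)).ne'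
  have hdist : ∀ q k, i q - r ≤ k → k + 1 ≤ i q + r → |xs q - x q k| ≤ (2 * r : ℕ) * h := by
    intro q k hk1 hk2
    have hiq := hi q
    have e1 := sub_le_mul_of_mesh (hmesh q) (i q - r) (2 * r - 1) (by omega)
    have e2 := hmono' q (i q - r) k hk1 (by omega)
    have e3 := hmono' q k (i q - r + (2 * r - 1)) (by omega) (by omega)
    have e4 := hmono' q (i q - r) (i q - 1) (by omega) (by omega)
    have e5 := hmono' q (i q) (i q - r + (2 * r - 1)) (by omega) (by omega)
    have e6 : ((2 * r - 1 : ℕ) : ℝ) * h ≤ (2 * r : ℕ) * h :=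
      mul_le_mul_of_nonneg_right (by exact_mod_cast Nat.sub_le _ _) hh.le
    have e7 := hxs q
    rw [abs_le]
    constructor <;> linarith
  set P : ℕ → (Fin n → ℕ) → ℝ := fun l j =>
    tensorLagEval n (fun q => Finset.Icc (i q - r + j q) (i q - r + j q + l)) x f xs with hP
  have hPf : ∀ l j, (∀ q, j q + l + 1 ≤ 2 * r) → l + 1 ≤ 2 * r →
      |P l j - f xs| ≤ E l * h ^ (l + 1) := by
    intro l j hj hl
    have hmem : ∀ q, ∀ k ∈ Finset.Icc (i q - r + j q) (i q - r + j q + l),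
        i q - r ≤ k ∧ k + 1 ≤ i q + r ∧ k ≤ N q := by
      intro q k hk
      have := hi q
      have := hj q
      rw [Finset.mem_Icc] at hk
      omega
    exact hE l hl _ x xs h hh.le hh1 (fun q => by rw [Nat.card_Icc]; omega)
      (fun q => hinj q _ fun k hk => (hmem q k hk).2.2)
      (fun q k hk => hxI q k (hmem q k hk).2.2) hxsI
      (fun q k hk => hdist q k (hmem q k hk).1 (hmem q k hk).2.1)
  have hpow : ∀ l, r ≤ l → h ^ (r - 1) * h ^ (l + 1) ≤ h ^ (2 * r) := by
    intro l hl
    rw [← pow_add]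
    exact pow_le_pow_of_le_one hh.le hh1 (by omega)
  have hQP : ∀ d, r + d + 1 ≤ 2 * r → ∀ j : Fin n → ℕ, (∀ q, j q + (r + d) + 1 ≤ 2 * r) →
      |Q (r + d) j - P (r + d) j| ≤ D d * h ^ (2 * r) := by
    intro d
    induction d with
    | zero =>
      intro _ j hj
      have hPr : P r j = Q r j := by
        rw [hQr j fun q => by have := hj q; omega]
        simp only [hP]
        congr 1
        funext q
        congr 1
        have := (hi q).1
        omega
      simp [hPr, hD]
    | succ d ih =>
      intro hd j hj
      set l := r + d with hl
      have hV : ∀ v ∈ Fintype.piFinset (fun _ : Fin n => ({0, 1} : Finset ℕ)), ∀ q,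
          v q = 0 ∨ v q = 1 := by
        intro v hv q
        simpa using Fintype.mem_piFinset.1 hv q
      have hJr : ∀ v ∈ Fintype.piFinset (fun _ : Fin n => ({0, 1} : Finset ℕ)), ∀ q,
          j q + (l + 1 - r) * v q < r := by
        intro v hv q
        have := hj q
        rcases hV v hv q with h0 | h0 <;> rw [h0] <;> omega
      have hiN : ∀ q, i q - r + j q + l + 1 ≤ N q := fun q => by
        have := hj q
        have := hi q
        omega
      have hj' : ∀ v ∈ Fintype.piFinset (fun _ : Fin n => ({0, 1} : Finset ℕ)), ∀ q,
          j q + v q + l + 1 ≤ 2 * r := by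
        intro v hv q
        have := hj q
        rcases hV v hv q with h0 | h0 <;> rw [h0] <;> omega
      have hPl : ∀ v : Fin n → ℕ, P l (fun q => j q + v q) = tensorLagEval n (fun q =>
          Finset.Icc (i q - r + j q + v q) (i q - r + j q + v q + l)) x f xs := fun v => by
        simp only [hP, ← add_assoc]
      have hQl := hQ l j (by omega) (by omega) fun q => by have := hj q; omega
      have hmain := abs_weno_step_sub_tensorLagEval_le (p := fun q => i q - r + j q) (m := l)
        (xs := xs) (f := f) (J := fun v => I fun q => j q + (l + 1 - r) * v q)
        (q₀ := fun v => Q l fun q => j q + v q) (ρ := h ^ (r - 1)) (F := f xs)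
        (D := D d * h ^ (2 * r)) (E := E l * h ^ (l + 1))
        (fun q => hinj q _ fun k hk => (Finset.mem_Icc.1 hk).2.trans (hiN q))
        (fun q => by
          have := hj q
          have := hi q
          exact (hmono' q _ (i q - 1) (by omega) (by omega)).trans_lt (hxs q).1)
        (fun q => by
          have := hi q
          exact (hxs q).2.trans_le (hmono' q (i q) _ (by omega) (hiN q)))
        ht hA.le hh (fun v hv => hI _ (hJr v hv))
        (fun v hv w hw => by
          rw [mul_assoc, ← pow_add, show 2 + (r - 1) = r + 1 by omega]
          exact hII _ _ (hJr v hv) (hJr w hw))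
        (fun v hv => by
          rw [← hPl]
          exact ih (by omega) _ (hj' v hv))
        (fun v hv => by
          rw [← hPl]
          exact hPf l _ (hj' v hv) (by omega))
      change |Q (l + 1) j - P (l + 1) j| ≤ _
      rw [hQl]
      refine hmain.trans ?_
      have hstep := mul_le_mul_of_nonneg_left (hpow l (by omega)) (mul_nonneg hκ0 (hE0 l))
      have hDs : D (d + 1) = D d + κ * E l := Finset.sum_range_succ _ _
      rw [hDs, add_mul]
      linarith
  have hfin := hQP (r - 1) (by omega) (fun _ => 0) fun q => by omega
  have hfinP := hPf (2 * r - 1) (fun _ => 0) (fun q => by omega) (by omega)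
  rw [show r + (r - 1) = 2 * r - 1 by omega] at hfin
  rw [show 2 * r - 1 + 1 = 2 * r by omega] at hfinP
  have h2r : 0 < h ^ (2 * r) := by positivity
  have htri := abs_sub_le (Q (2 * r - 1) fun _ => 0) (P (2 * r - 1) fun _ => 0) (f xs)
  linarith
end
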